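/- Let n ≥ 3, let L be a weighted Laplacian of a ring graph on n vertices, and let 1 ≤ k ≤ n−1. Then the maximum over all nonempty subsets S of the vertices with |S| ≤ k and S not equal to the full vertex set of λ_min(L_ff) equals the maximum over all j ∈ {1,…,k} and all sets of j distinct vertices u₁, …, u_j listed in clockwise (cyclic) order (with u_{j+1} = u₁, and not all vertices chosen) of the minimum of λ_min over the nonempty cyclic segment submatrices L_{(u_i→u_{i+1})}, i = 1,…,j. -/

import Mathlib

open Matrix

/-- `L` is a weighted Laplacian of a ring graph on `n + 3` (i.e. `≥ 3`) vertices,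
with indices taken modulo `n + 3`. -/
def IsRingLaplacian {n : ℕ} (L : Matrix (Fin (n + 3)) (Fin (n + 3)) ℝ) : Prop :=
  L.IsSymm ∧
  (∀ i j : Fin (n + 3), j = i + 1 ∨ j = i - 1 → L i j < 0) ∧
  (∀ i j : Fin (n + 3), i ≠ j → j ≠ i + 1 → j ≠ i - 1 → L i j = 0) ∧
  (∀ i : Fin (n + 3), ∑ j, L i j = 0)

/-- The index set of the cyclic segment `(u → v)`: the vertices strictly between `u` and
`v` in clockwise order (all vertices other than `u` when `v = u`). -/
def CSegIdx {N : ℕ} (u v : Fin N) : Type :=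
  {w : Fin N // 0 < (w - u).val ∧ (v = u ∨ (w - u).val < (v - u).val)}

instance {N : ℕ} (u v : Fin N) : Fintype (CSegIdx u v) := by
  unfold CSegIdx; infer_instance

instance {N : ℕ} (u v : Fin N) : DecidableEq (CSegIdx u v) := by
  unfold CSegIdx; infer_instance

/-- `L_{(u→v)}`: the principal submatrix of `L` on the vertices strictly between `u` and
`v` in clockwise order. -/
def cseg {N : ℕ} (L : Matrix (Fin N) (Fin N) ℝ) (u v : Fin N) :
    Matrix (CSegIdx u v) (CSegIdx u v) ℝ :=
  L.submatrix (·.val) (·.val)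

/-- The grounded Laplacian `L_ff`. -/
def grounded {N : ℕ} (L : Matrix (Fin N) (Fin N) ℝ) (S : Finset (Fin N)) :
    Matrix {i : Fin N // i ∉ S} {i : Fin N // i ∉ S} ℝ :=
  L.submatrix (·.val) (·.val)

/-- The smallest eigenvalue of a real (symmetric) matrix, as the infimum of its spectrum. -/
noncomputable def lambdaMin {m : Type*} [Fintype m] [DecidableEq m]
    (M : Matrix m m ℝ) : ℝ :=
  sInf (spectrum ℝ M)

/-!
Deleting the rows and columns of the leaders `u 0, …, u j` cuts the ring into the open arcs between
consecutive leaders. Vertices of distinct arcs are not adjacent, so the grounded Laplacian is, up to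
relabelling, block diagonal with the cyclic segment submatrices as blocks. Its spectrum is the union
of theirs, so its least eigenvalue is the smallest least eigenvalue of a nonempty block. Every
nonempty leader set has a clockwise listing, so the two maxima run over the same values.
-/

/-- The open arc of the cycle `Fin N` running clockwise from `u` to `v`, as a set; its underlying
type is `CSegIdx u v`. In particular `openArc u u` is the complement of `{u}`. -/
def openArc {N : ℕ} (u v : Fin N) : Set (Fin N) :=
  {w | 0 < (w - u).val ∧ (v = u ∨ (w - u).val < (v - u).val)}

/-- The vertices `u 0, …, u j` are distinct and met in this order when the cycle is traversed
clockwise once from `u 0`. -/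
def IsClockwise {N j : ℕ} (u : Fin (j + 1) → Fin N) : Prop :=
  StrictMono fun i => u i - u 0

/-- A matrix indexed by the cycle `Fin N` whose off-diagonal entries vanish except between
neighbours. -/
def IsCyclicTridiagonal {N : ℕ} [NeZero N] {R : Type*} [Zero R]
    (L : Matrix (Fin N) (Fin N) R) : Prop :=
  ∀ i j, i ≠ j → j ≠ i + 1 → j ≠ i - 1 → L i j = 0

theorem lambdaMin_submatrix_equiv {m m' : Type*} [Fintype m] [DecidableEq m] [Fintype m']
    [DecidableEq m'] (M : Matrix m' m' ℝ) (e : m ≃ m') :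
    lambdaMin (M.submatrix e e) = lambdaMin M :=
  congrArg sInf (AlgEquiv.spectrum_eq (reindexAlgEquiv ℝ ℝ e.symm) M)

theorem isLeast_lambdaMin {m : Type*} [Fintype m] [DecidableEq m] [Nonempty m]
    {M : Matrix m m ℝ} (hM : M.IsSymm) : IsLeast (spectrum ℝ M) (lambdaMin M) := by
  have hM' : M.IsHermitian := isHermitian_iff_isSymm.2 hM
  have nonempty : (spectrum ℝ M).Nonempty :=
    hM'.spectrum_real_eq_range_eigenvalues ▸ Set.range_nonempty _
  exact ⟨nonempty.csInf_mem M.finite_real_spectrum,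
    fun _ hr => csInf_le M.finite_real_spectrum.bddBelow hr⟩

section BlockDiagonal

variable {o : Type*} [Fintype o] [DecidableEq o] {m : o → Type*} [∀ i, Fintype (m i)]
  [∀ i, DecidableEq (m i)]

theorem det_blockDiagonal' {R : Type*} [CommRing R] (M : ∀ i, Matrix (m i) (m i) R) :
    (blockDiagonal' M).det = ∏ i, (M i).det := by
  -- Any linear order on the blocks makes the matrix block triangular.
  let _ : LinearOrder o := LinearOrder.lift' (Fintype.equivFin o) (Fintype.equivFin o).injective
  rw [(blockTriangular_blockDiagonal' M).det_fintype]
  refine Finset.prod_congr rfl fun i _ => ?_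
  rw [← det_submatrix_equiv_self (Equiv.sigmaSubtype i).symm]
  congr 1
  ext x y
  exact blockDiagonal'_apply_eq M i x y

theorem spectrum_blockDiagonal' {K : Type*} [Field K] (M : ∀ i, Matrix (m i) (m i) K) :
    spectrum K (blockDiagonal' M) = ⋃ i, spectrum K (M i) := by
  ext r
  have algebraMap_sub : algebraMap K _ r - blockDiagonal' M =
      blockDiagonal' fun i => algebraMap K _ r - M i := by
    simp only [Algebra.algebraMap_eq_smul_one, ← blockDiagonal'_one, ← blockDiagonal'_smul,
      ← blockDiagonal'_sub]
    rfl
  simp only [Set.mem_iUnion, spectrum.mem_iff, algebraMap_sub, isUnit_iff_isUnit_det,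
    det_blockDiagonal', isUnit_iff_ne_zero, not_not, Finset.prod_eq_zero_iff, Finset.mem_univ,
    true_and]

theorem isLeast_lambdaMin_blockDiagonal' [Nonempty (Σ i, m i)] {M : ∀ i, Matrix (m i) (m i) ℝ}
    (hM : ∀ i, (M i).IsSymm) :
    IsLeast {y | ∃ i, Nonempty (m i) ∧ y = lambdaMin (M i)} (lambdaMin (blockDiagonal' M)) := by
  have hsymm : (blockDiagonal' M).IsSymm := by
    simp only [IsSymm, blockDiagonal'_transpose, (hM _).eq]
  have hleast := isLeast_lambdaMin hsymm
  rw [spectrum_blockDiagonal'] at hleast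
  have le_block : ∀ i, Nonempty (m i) → lambdaMin (blockDiagonal' M) ≤ lambdaMin (M i) :=
    fun i _ => hleast.2 (Set.mem_iUnion_of_mem i (isLeast_lambdaMin (hM i)).1)
  obtain ⟨i, hi⟩ := Set.mem_iUnion.1 hleast.1
  have hmi : Nonempty (m i) := by
    by_contra! h
    simp only [spectrum.of_subsingleton, Set.mem_empty_iff_false] at hi
  refine ⟨⟨i, hmi, (le_block i hmi).antisymm ((isLeast_lambdaMin (hM i)).2 hi)⟩, ?_⟩
  rintro _ ⟨a, ha, rfl⟩
  exact le_block a ha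

end BlockDiagonal

section Arcs

variable {N : ℕ} {u v w : Fin N}

theorem openArc_of_lt (huv : u < v) : openArc u v = Set.Ioo u v := by
  ext w
  have hvu : (v - u).val = v.val - u.val := Fin.sub_val_of_le huv.le
  simp only [openArc, Set.mem_ofPred_eq, huv.ne', false_or, Set.mem_Ioo, Fin.lt_def] at huv ⊢
  rcases le_or_gt u w with h | h
  · have := Fin.sub_val_of_le h
    omega
  · have := Fin.coe_sub_iff_lt.2 h
    omega

variable [NeZero N]

theorem sub_mem_openArc (z : Fin N) : w - z ∈ openArc (u - z) (v - z) ↔ w ∈ openArc u v := by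
  simp only [openArc, Set.mem_ofPred_eq, sub_sub_sub_cancel_right, sub_left_inj]

theorem openArc_zero_right (u : Fin N) : openArc u 0 = Set.Ioi u := by
  ext w
  rcases eq_or_ne u 0 with rfl | hu
  · simp [openArc, Fin.pos_iff_ne_zero]
  have hu0 := Fin.pos_iff_ne_zero.2 hu
  have h0u := Fin.coe_sub_iff_lt.2 hu0
  simp only [openArc, Set.mem_ofPred_eq, hu.symm, false_or, Set.mem_Ioi, Fin.lt_def,
    Fin.val_zero] at hu0 h0u ⊢
  rcases le_or_gt u w with h | h
  · have := Fin.sub_val_of_le h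
    omega
  · have := Fin.coe_sub_iff_lt.2 h
    omega

theorem add_one_mem_openArc (hw : w ∈ openArc u v) (hu : w + 1 ≠ u) (hv : w + 1 ≠ v) :
    w + 1 ∈ openArc u v := by
  have hsub : w + 1 - u = w - u + 1 := add_sub_right_comm w 1 u
  have hval : (w + 1 - u).val = (w - u).val + 1 := by
    rw [hsub]
    refine Fin.val_add_one_of_lt' ((Nat.succ_le_of_lt (w - u).isLt).lt_of_ne fun h => hu ?_)
    rw [← sub_eq_zero, hsub]
    ext
    simp [Fin.val_add, ← Nat.succ_eq_add_one, h]
  have hne : (w + 1 - u).val ≠ (v - u).val := fun h => hv (sub_left_injective (Fin.ext h))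
  obtain ⟨-, hvu⟩ := hw
  exact ⟨by omega, hvu.imp_right fun hlt => by omega⟩

end Arcs

namespace IsClockwise

variable {N j : ℕ} {u : Fin (j + 1) → Fin N} {i i' : Fin (j + 1)} {x : Fin N}

theorem injective (hu : IsClockwise u) : Function.Injective u :=
  Function.Injective.of_comp (f := fun w => w - u 0) (StrictMono.injective hu)

variable [NeZero N]

theorem mem_openArc_iff (hu : IsClockwise u) :
    x ∈ openArc (u i) (u (i + 1)) ↔
      u i - u 0 < x - u 0 ∧ (i = Fin.last j ∨ x - u 0 < u (i + 1) - u 0) := by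
  -- Rotate `u 0` to `0`, where clockwise arcs are intervals of the linear order on `Fin N`.
  rw [← sub_mem_openArc (u 0)]
  rcases eq_or_ne i (Fin.last j) with rfl | hi
  · simp [openArc_zero_right]
  · have hlt : i < i + 1 := Fin.lt_add_one_iff.2 (Fin.lt_last_iff_ne_last.2 hi)
    rw [openArc_of_lt (hu hlt)]
    simp [hi]

theorem pairwise_disjoint_openArc (hu : IsClockwise u) :
    Pairwise (Function.onFun Disjoint fun i => openArc (u i) (u (i + 1))) := by
  refine (pairwise_disjoint_on _).2 fun i i' hlt => Set.disjoint_left.2 fun x hx hx' => ?_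
  rw [hu.mem_openArc_iff] at hx hx'
  have hle : u (i + 1) - u 0 ≤ u i' - u 0 := StrictMono.monotone hu (Fin.add_one_le_of_lt hlt)
  exact (hx.2.resolve_left (Fin.ne_last_of_lt hlt)).asymm (hle.trans_lt hx'.1)

theorem apply_notMem_openArc (hu : IsClockwise u) (l : Fin (j + 1)) :
    u l ∉ openArc (u i) (u (i + 1)) := by
  rw [hu.mem_openArc_iff]
  rintro ⟨hl, hr⟩
  have hil : i < l := (StrictMono.lt_iff_lt hu).1 hl
  have hli : l < i + 1 := (StrictMono.lt_iff_lt hu).1 (hr.resolve_left (Fin.ne_last_of_lt hil))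
  exact hli.not_ge (Fin.add_one_le_of_lt hil)

theorem exists_mem_openArc (hu : IsClockwise u) (hx : x ∉ Set.range u) :
    ∃ i, x ∈ openArc (u i) (u (i + 1)) := by
  obtain ⟨i, hi, hmax⟩ := Set.exists_max_image {i | u i - u 0 ≤ x - u 0} id (Set.toFinite _)
    ⟨0, by simp⟩
  refine ⟨i, hu.mem_openArc_iff.2 ⟨hi.lt_of_ne fun h => hx ⟨i, sub_left_injective h⟩, ?_⟩⟩
  by_contra! hlast
  have hlt : i < i + 1 := Fin.lt_add_one_iff.2 (Fin.lt_last_iff_ne_last.2 hlast.1)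
  exact hlt.not_ge (hmax (i + 1) hlast.2)

theorem iUnion_openArc (hu : IsClockwise u) :
    ⋃ i, openArc (u i) (u (i + 1)) = (Set.range u)ᶜ := by
  ext x
  refine Set.mem_iUnion.trans ⟨?_, hu.exists_mem_openArc⟩
  rintro ⟨i, hi⟩ ⟨l, rfl⟩
  exact hu.apply_notMem_openArc l hi

/-- The vertices outside `u 0, …, u j`, sorted by the segment to which they belong. -/
noncomputable def segmentEquiv (hu : IsClockwise u) :
    (Σ i, CSegIdx (u i) (u (i + 1))) ≃ {w // w ∉ Finset.univ.image u} :=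
  (Set.unionEqSigmaOfDisjoint hu.pairwise_disjoint_openArc).symm.trans <|
    Equiv.subtypeEquivRight fun w => by simp [hu.iUnion_openArc]

theorem eq_of_add_one_mem_openArc (hu : IsClockwise u) (hx : x ∈ openArc (u i) (u (i + 1)))
    (hx' : x + 1 ∈ openArc (u i') (u (i' + 1))) : i = i' := by
  have hne : ∀ l, x + 1 ≠ u l := fun l h => hu.apply_notMem_openArc l (h ▸ hx')
  have hmem := add_one_mem_openArc hx (hne i) (hne (i + 1))
  exact hu.pairwise_disjoint_openArc.eq (Set.not_disjoint_iff.2 ⟨x + 1, hmem, hx'⟩)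

end IsClockwise

theorem exists_isClockwise_image_eq {N : ℕ} [NeZero N] {S : Finset (Fin N)} (hS : S.Nonempty) :
    ∃ (j : ℕ) (u : Fin (j + 1) → Fin N), IsClockwise u ∧ Finset.univ.image u = S := by
  obtain ⟨z, hz⟩ := hS
  let T := S.image (· - z)
  have h0T : 0 ∈ T := Finset.mem_image.2 ⟨z, hz, sub_self z⟩
  obtain ⟨j, hj⟩ := Nat.exists_eq_succ_of_ne_zero (Finset.card_ne_zero_of_mem h0T)
  let e := T.orderEmbOfFin hj
  have he0 : e 0 = 0 := by
    rw [← le_zero_iff]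
    exact (T.orderEmbOfFin_zero hj j.succ_pos).trans_le (T.min'_le 0 h0T)
  refine ⟨j, fun i => e i + z, ?_, ?_⟩
  · simpa only [IsClockwise, he0, zero_add, add_sub_cancel_right] using e.strictMono
  · have himage : Finset.univ.image e = T := T.image_orderEmbOfFin_univ hj
    calc Finset.univ.image (fun i => e i + z) = T.image (· + z) := by
          rw [← himage, Finset.image_image]; rfl
      _ = S := by simp [T, Finset.image_image, Function.comp_def]

namespace IsCyclicTridiagonal

variable {N j : ℕ} [NeZero N] {u : Fin (j + 1) → Fin N}

theorem apply_eq_zero_of_mem_openArc {R : Type*} [Zero R] {L : Matrix (Fin N) (Fin N) R}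
    (hL : IsCyclicTridiagonal L) (hu : IsClockwise u) {i i' : Fin (j + 1)} (hi : i ≠ i')
    {x y : Fin N} (hx : x ∈ openArc (u i) (u (i + 1))) (hy : y ∈ openArc (u i') (u (i' + 1))) :
    L x y = 0 := by
  refine hL x y ?_ ?_ ?_
  · exact (hu.pairwise_disjoint_openArc hi).ne_of_mem hx hy
  · rintro rfl
    exact hi (hu.eq_of_add_one_mem_openArc hx hy)
  · rintro rfl
    exact hi (hu.eq_of_add_one_mem_openArc hy (by rwa [sub_add_cancel])).symm

theorem grounded_submatrix_segmentEquiv {L : Matrix (Fin N) (Fin N) ℝ}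
    (hL : IsCyclicTridiagonal L) (hu : IsClockwise u) :
    (grounded L (Finset.univ.image u)).submatrix hu.segmentEquiv hu.segmentEquiv =
      blockDiagonal' fun i => cseg L (u i) (u (i + 1)) := by
  ext ⟨i, x⟩ ⟨i', y⟩
  rcases eq_or_ne i i' with rfl | hi
  · rw [blockDiagonal'_apply_eq]
    rfl
  · rw [blockDiagonal'_apply_ne _ _ _ hi]
    exact hL.apply_eq_zero_of_mem_openArc hu hi x.2 y.2

theorem lambdaMin_grounded_image {L : Matrix (Fin N) (Fin N) ℝ} (hL : IsCyclicTridiagonal L)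
    (hsymm : L.IsSymm) (hu : IsClockwise u) (hne : Finset.univ.image u ≠ Finset.univ) :
    lambdaMin (grounded L (Finset.univ.image u)) =
      sInf {y | ∃ i, Nonempty (CSegIdx (u i) (u (i + 1))) ∧
        y = lambdaMin (cseg L (u i) (u (i + 1)))} := by
  obtain ⟨w, hw⟩ : ∃ w, w ∉ Finset.univ.image u := by
    simpa only [ne_eq, Finset.eq_univ_iff_forall, not_forall] using hne
  have : Nonempty (Σ i, CSegIdx (u i) (u (i + 1))) := ⟨hu.segmentEquiv.symm ⟨w, hw⟩⟩
  rw [← lambdaMin_submatrix_equiv _ hu.segmentEquiv, hL.grounded_submatrix_segmentEquiv hu]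
  exact (isLeast_lambdaMin_blockDiagonal' fun i => hsymm.submatrix _).csInf_eq.symm

end IsCyclicTridiagonal

theorem ring_convergence_leader_selection_general {N k : ℕ} [NeZero N]
    {L : Matrix (Fin N) (Fin N) ℝ} (hL : IsCyclicTridiagonal L) (hsymm : L.IsSymm) :
    {x : ℝ | ∃ S : Finset (Fin N), S.Nonempty ∧ S.card ≤ k ∧
        S ≠ Finset.univ ∧ x = lambdaMin (grounded L S)} =
    {x : ℝ | ∃ j : ℕ, j + 1 ≤ k ∧ ∃ u : Fin (j + 1) → Fin N, IsClockwise u ∧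
        Finset.image u Finset.univ ≠ Finset.univ ∧
        x = sInf {y : ℝ | ∃ i : Fin (j + 1),
          Nonempty (CSegIdx (u i) (u (i + 1))) ∧
          y = lambdaMin (cseg L (u i) (u (i + 1)))}} := by
  have card_image {j : ℕ} {u : Fin (j + 1) → Fin N} (hu : IsClockwise u) :
      (Finset.univ.image u).card = j + 1 := by
    rw [Finset.card_image_of_injective _ hu.injective, Finset.card_fin]
  ext x
  constructor
  · rintro ⟨S, hS, hcard, hne, rfl⟩
    obtain ⟨j, u, hu, rfl⟩ := exists_isClockwise_image_eq hS
    exact ⟨j, card_image hu ▸ hcard, u, hu, hne, hL.lambdaMin_grounded_image hsymm hu hne⟩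
  · rintro ⟨j, hj, u, hu, hne, rfl⟩
    exact ⟨Finset.univ.image u, Finset.univ_nonempty.image u, (card_image hu).trans_le hj, hne,
      (hL.lambdaMin_grounded_image hsymm hu hne).symm⟩

/-- for a weighted ring Laplacian on `n + 3` vertices and
`1 ≤ k ≤ (n + 3) - 1`, the maximum of `λ_min(L_ff)` over all nonempty proper leader sets
`S` with `|S| ≤ k` equals the maximum, over all `j ∈ {1,…,k}` (written `j'+1 ≤ k`) and
all proper families of `j'+1` distinct vertices listed in clockwise cyclic order, of the
minimum of `λ_min` over the nonempty cyclic segment blocks. -/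
theorem ring_convergence_leader_selection {n k : ℕ} (hk1 : 1 ≤ k) (hkn : k ≤ n + 2)
    (L : Matrix (Fin (n + 3)) (Fin (n + 3)) ℝ) (hL : IsRingLaplacian L) :
    sSup { x : ℝ | ∃ S : Finset (Fin (n + 3)), S.Nonempty ∧ S.card ≤ k ∧
        S ≠ Finset.univ ∧ x = lambdaMin (grounded L S) } =
    sSup { x : ℝ | ∃ j : ℕ, j + 1 ≤ k ∧ ∃ u : Fin (j + 1) → Fin (n + 3),
        (StrictMono fun i : Fin (j + 1) => (u i - u 0).val) ∧
        Finset.image u Finset.univ ≠ Finset.univ ∧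
        x = sInf { y : ℝ | ∃ i : Fin (j + 1),
          Nonempty (CSegIdx (u i) (u (i + 1))) ∧
          y = lambdaMin (cseg L (u i) (u (i + 1))) } } :=
  congrArg sSup (ring_convergence_leader_selection_general hL.2.2.1 hL.1)
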